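/- Let E be a finite-dimensional complex vector space of dimension n ≥ 1 and let L = L_{−1} ⊕ L_0 ⊕ L_1 be an irreducible graded Lie subalgebra of Vect_pol(E) with L_{−1} = Vect_{−1}(E) and L_1 ≠ 0. If L' is a Lie subalgebra of Vect_pol(E) containing L properly (L ⊊ L'), then L' is infinite-dimensional and L' is a simple Lie algebra. -/

import Mathlib

/-!
By repeated differentiation and irreducibility, a nonzero subspace stable under `L` contains every
constant field. An abelian ideal would contain all of them together with their brackets with `L₁`,
and an ideal and its Killing complement cannot both contain them, so `L` is simple. As derivations
of a semisimple algebra are inner, the Euler field lies in `L`.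

If `L'` is finite-dimensional, the orthogonal of `L` for the Killing form of `L'` is stable under
`L`, and it meets `L` trivially by Cartan's criterion. So it contains no constant field, hence
vanishes, and `L' = L`.

A nonzero ideal of `L'` contains the constant fields, hence meets the simple algebra `L`, hence
contains `L` and the Euler field. It then suffices that a subalgebra `S` containing `L` is its own
normalizer. The normalizer is spanned by eigenvectors of the Euler field; those with nonzero
eigenvalue clearly lie in `S`. On the others one uses that an irreducible Lie algebra of
endomorphisms containing the scalars is its own normalizer: its traceless part is semisimple and
irreducible, so by inner derivations and Schur's lemma a normalizing endomorphism is the sum of an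
element of it and a scalar.
-/

open MvPolynomial

/-- The Lie algebra of polynomial vector fields on `E = 𝕜^n`, realized as the
derivations of the polynomial algebra `𝕜[x_1, …, x_n]`. -/
abbrev Vect (𝕜 : Type*) [Field 𝕜] (n : ℕ) : Type _ :=
  Derivation 𝕜 (MvPolynomial (Fin n) 𝕜) (MvPolynomial (Fin n) 𝕜)

variable (𝕜 : Type*) [Field 𝕜] (n : ℕ)

/-- The Euler vector field `ℰ = Σ x^j ∂_j`. -/
noncomputable def euler : Vect 𝕜 n :=
  MvPolynomial.mkDerivation 𝕜 fun i => MvPolynomial.X i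

/-- `Vect_p(E)`: the eigenspace of `ad(ℰ)` for the eigenvalue `p`, i.e. the vector fields
with homogeneous coefficients of degree `p+1`. -/
noncomputable def VectP (p : ℤ) : Submodule 𝕜 (Vect 𝕜 n) :=
  Module.End.eigenspace (LieAlgebra.ad 𝕜 (Vect 𝕜 n) (euler 𝕜 n)) ((p : 𝕜))

/-- A Lie subalgebra `L` of `Vect_pol(E)` is graded if `L = ⊕_{p ≥ -1} (L ∩ Vect_p(E))`. -/
def IsGradedSubalg (L : LieSubalgebra 𝕜 (Vect 𝕜 n)) : Prop :=
  L.toSubmodule = ⨆ p ≥ (-1 : ℤ), (L.toSubmodule ⊓ VectP 𝕜 n p)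

/-- A Lie subalgebra `L` of `Vect_pol(E)` is maximal if the only subalgebras containing it
are `L` itself and `Vect_pol(E)`. -/
def IsMaxSubalg (L : LieSubalgebra 𝕜 (Vect 𝕜 n)) : Prop :=
  ∀ L' : LieSubalgebra 𝕜 (Vect 𝕜 n), L ≤ L' → L' = L ∨ L' = ⊤

/-- A graded subalgebra `L` is irreducible if the representation of `L₀ = L ∩ Vect_0(E)` on
`L₋₁ = L ∩ Vect_{-1}(E)` given by the adjoint action is irreducible. -/
def IsIrreducibleRep (L : LieSubalgebra 𝕜 (Vect 𝕜 n)) : Prop :=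
  L.toSubmodule ⊓ VectP 𝕜 n (-1) ≠ ⊥ ∧
    ∀ F : Submodule 𝕜 (Vect 𝕜 n), F ≤ L.toSubmodule ⊓ VectP 𝕜 n (-1) →
      (∀ x ∈ L.toSubmodule ⊓ VectP 𝕜 n 0, ∀ y ∈ F, ⁅x, y⁆ ∈ F) →
      F = ⊥ ∨ F = L.toSubmodule ⊓ VectP 𝕜 n (-1)

section LinearAlgebra

variable {K V : Type*} [Field K] [AddCommGroup V] [Module K V]

lemma mem_of_sum_mem_of_mapsTo {f : Module.End K V} {p : Submodule K V}
    (hp : ∀ v ∈ p, f v ∈ p) {s : Finset K} {u : K → V} (hu : ∀ μ ∈ s, u μ ∈ f.eigenspace μ)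
    (hs : ∑ μ ∈ s, u μ ∈ p) : ∀ μ ∈ s, u μ ∈ p := by
  classical
  induction s using Finset.induction_on generalizing u with
  | empty => simp
  | insert ν s hν ih =>
    rw [Finset.forall_mem_insert] at hu
    have hdiff : ∑ μ ∈ s, (μ - ν) • u μ ∈ p := by
      have hsum : ∑ μ ∈ s, (μ - ν) • u μ
          = f (∑ μ ∈ insert ν s, u μ) - ν • ∑ μ ∈ insert ν s, u μ := by
        simp only [Finset.sum_insert hν, map_add, map_sum, smul_add, Finset.smul_sum, sub_smul,
          Finset.sum_sub_distrib, Module.End.mem_eigenspace_iff.mp hu.1,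
          Finset.sum_congr rfl fun μ hμ => Module.End.mem_eigenspace_iff.mp (hu.2 μ hμ)]
        abel
      exact hsum ▸ p.sub_mem (hp _ hs) (p.smul_mem ν hs)
    have hmem : ∀ μ ∈ s, u μ ∈ p := fun μ hμ =>
      (p.smul_mem_iff (sub_ne_zero.mpr (ne_of_mem_of_not_mem hμ hν))).mp <|
        ih (fun μ hμ => Submodule.smul_mem _ _ (hu.2 μ hμ)) hdiff μ hμ
    rw [Finset.sum_insert hν, p.add_mem_iff_left (p.sum_mem hmem)] at hs
    exact Finset.forall_mem_insert _ _ _ |>.mpr ⟨hs, hmem⟩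

end LinearAlgebra

section LieAlgebra

variable {K A M : Type*} [Field K] [LieRing A] [LieAlgebra K A]
  [AddCommGroup M] [Module K M] [LieRingModule A M] [LieModule K A M]

lemma lie_mem_eigenspace_ad {e x y : A} {μ ν : K} (hx : x ∈ (LieAlgebra.ad K A e).eigenspace μ)
    (hy : y ∈ (LieAlgebra.ad K A e).eigenspace ν) :
    ⁅x, y⁆ ∈ (LieAlgebra.ad K A e).eigenspace (μ + ν) := by
  rw [Module.End.mem_eigenspace_iff, LieAlgebra.ad_apply] at *
  rw [leibniz_lie, hx, hy, smul_lie, lie_smul, add_smul]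

lemma mem_normalizer_lieSpan {s : Set A} {z : A}
    (hz : ∀ x ∈ s, ⁅z, x⁆ ∈ LieSubalgebra.lieSpan K A s) :
    z ∈ (LieSubalgebra.lieSpan K A s).normalizer := by
  refine (LieSubalgebra.mem_normalizer_iff _ z).mpr fun x hx => ?_
  induction hx using LieSubalgebra.lieSpan_induction with
  | mem x hx => exact hz x hx
  | zero => exact (lie_zero z : ⁅z, (0 : A)⁆ = 0).symm ▸ zero_mem _
  | add x y _ _ hx hy => exact (lie_add z x y).symm ▸ add_mem hx hy
  | smul t x _ hx => exact (lie_smul t z x).symm ▸ LieSubalgebra.smul_mem _ t hx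
  | lie x y hxs hys hx hy =>
    rw [leibniz_lie]
    exact add_mem (LieSubalgebra.lie_mem _ hx hys) (LieSubalgebra.lie_mem _ hxs hy)

lemma exists_eq_smul_one_of_forall_lie [IsAlgClosed K] [FiniteDimensional K M]
    [LieModule.IsIrreducible K A M] {f : Module.End K M} (hf : ∀ (x : A) m, f ⁅x, m⁆ = ⁅x, f m⁆) :
    ∃ μ : K, f = μ • 1 := by
  have := LieModule.nontrivial_of_isIrreducible K A M
  obtain ⟨μ, hμ⟩ := f.exists_eigenvalue
  let N : LieSubmodule K A M :=
    { f.eigenspace μ with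
      lie_mem := fun {x m} hm => by
        have hm' : f m = μ • m := Module.End.mem_eigenspace_iff.mp hm
        exact Module.End.mem_eigenspace_iff.mpr (by rw [hf, hm', lie_smul]) }
  have hN : N = ⊤ := (eq_bot_or_eq_top N).resolve_left fun h =>
    hμ (congrArg LieSubmodule.toSubmodule h)
  exact ⟨μ, LinearMap.ext fun m => Module.End.mem_eigenspace_iff.mp (hN ▸ trivial : m ∈ N)⟩

variable (K A M) in
/-- The subalgebra of the elements that act on the representation `M` with trace zero. -/
noncomputable def traceFree : LieSubalgebra K A where
  __ := (LinearMap.trace K M ∘ₗ (LieModule.toEnd K A M : A →ₗ[K] Module.End K M)).ker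
  lie_mem' _ _ := by simp

lemma mem_traceFree {x : A} :
    x ∈ traceFree K A M ↔ LinearMap.trace K M (LieModule.toEnd K A M x) = 0 :=
  Iff.rfl

lemma lie_mem_traceFree (x y : A) : ⁅x, y⁆ ∈ traceFree K A M := by
  simp [mem_traceFree]

variable [CharZero K]

section TraceForm

attribute [local instance] LieRing.ofAssociativeRing

lemma isSolvable_of_traceForm_eq_zero [FiniteDimensional K M] [LieModule.IsFaithful K A M]
    (h : LieModule.traceForm K A M = 0) : LieAlgebra.IsSolvable A := by
  let D := LieAlgebra.derivedSeries K A 1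
  have hnil := (LieModule.isNilpotent_iff_forall' (R := K)).mp
    (LieModule.isNilpotent_derivedSeries_of_traceForm_eq_zero h)
  let ρ := LieModule.toEnd K D M
  have hρ : Function.Injective ρ :=
    (LieModule.IsFaithful.injective_toEnd (R := K) (L := A)).comp Subtype.val_injective
  have : LieRing.IsNilpotent ρ.range := by
    rw [LieAlgebra.isNilpotent_iff_forall (R := K)]
    rintro ⟨_, x, rfl⟩
    exact LieAlgebra.isNilpotent_ad_of_isNilpotent (hnil x)
  have : LieRing.IsNilpotent D :=
    Function.Injective.lieAlgebra_isNilpotent (R := K) (f := ρ.rangeRestrict)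
      fun _ _ hxy => hρ (congrArg Subtype.val hxy)
  obtain ⟨k, hk⟩ := LieAlgebra.IsSolvable.solvable K D
  refine LieAlgebra.IsSolvable.mk (R := K) (k := k + 1) ?_
  rw [LieAlgebra.derivedSeries_def, LieAlgebra.derivedSeriesOfIdeal_add]
  exact (LieIdeal.derivedSeries_eq_bot_iff D k).mp hk

end TraceForm

lemma isCompl_killingForm_orthogonal [FiniteDimensional K A] (H : LieSubalgebra K A)
    [LieAlgebra.HasTrivialRadical K H] :
    IsCompl H.toSubmodule ((killingForm K A).orthogonal H.toSubmodule) := by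
  -- Cartan's criterion makes the kernel `I` of the trace form of the `H`-module `A` solvable.
  let I : LieIdeal K H := LieAlgebra.InvariantForm.orthogonal (LieModule.traceForm K H A)
    (LieModule.traceForm_lieInvariant K H A) ⊤
  have : LieModule.IsFaithful K I A := (LieModule.isFaithful_iff' K I A).mpr fun x hx =>
    Subtype.ext <| (LieModule.isFaithful_iff' K H H).mp inferInstance x.1 fun y =>
      Subtype.ext (hx y)
  have : LieAlgebra.IsSolvable I := isSolvable_of_traceForm_eq_zero (K := K) (M := A) <| by
    ext x y
    exact (LieAlgebra.InvariantForm.mem_orthogonal ..).mp y.2 x trivial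
  have hI : I = ⊥ := LieAlgebra.HasTrivialRadical.eq_bot_of_isSolvable I
  refine (LinearMap.BilinForm.isCompl_orthogonal_iff_disjoint
      (LieModule.traceForm_isSymm K A A).isRefl).mpr (Submodule.disjoint_def.mpr fun x hx hx' => ?_)
  have hxI : (⟨x, hx⟩ : H) ∈ I :=
    (LieAlgebra.InvariantForm.mem_orthogonal ..).mpr fun y _ => hx' y y.2
  rw [hI, LieSubmodule.mem_bot] at hxI
  exact congrArg Subtype.val hxI

lemma exists_lie_eq_of_mem_normalizer {H : LieSubalgebra K A} [FiniteDimensional K H]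
    [LieAlgebra.HasTrivialRadical K H] {z : A} (hz : z ∈ H.normalizer) :
    ∃ y ∈ H, ∀ x ∈ H, ⁅z, x⁆ = ⁅y, x⁆ := by
  have hzH := (H.mem_normalizer_iff z).mp hz
  let D : LieDerivation K H H :=
    { toLinearMap := (LieAlgebra.ad K A z).restrict hzH
      leibniz' := fun a b => Subtype.ext <| by
        change ⁅z, ⁅a.1, b.1⁆⁆ = ⁅a.1, ⁅z, b.1⁆⁆ - ⁅b.1, ⁅z, a.1⁆⁆
        rw [leibniz_lie, ← lie_skew b.1, sub_neg_eq_add, add_comm] }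
  obtain ⟨y, hy⟩ := LieDerivation.IsKilling.exists_eq_ad D
  refine ⟨y, y.2, fun x hx => ?_⟩
  have hyx := LieDerivation.congr_fun hy ⟨x, hx⟩
  rw [LieDerivation.ad_apply_apply] at hyx
  exact (congrArg Subtype.val hyx).symm

section Normalizer

variable [FiniteDimensional K M] {H : LieSubalgebra K A} [LieModule.IsIrreducible K H M]
  {z : A} (hzH : z ∈ H) (hz : ∀ m : M, ⁅z, m⁆ = m)

include hzH hz

lemma isIrreducible_inf_traceFree :
    LieModule.IsIrreducible K (H ⊓ traceFree K A M : LieSubalgebra K A) M := by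
  have := LieModule.nontrivial_of_isIrreducible K H M
  refine LieModule.IsIrreducible.mk fun N hN => ?_
  have hlie : ∀ x ∈ H, ∀ m ∈ N, ⁅x, m⁆ ∈ N := by
    intro x hx m hm
    let t := LinearMap.trace K M (LieModule.toEnd K A M x) / Module.finrank K M
    have hzid : LieModule.toEnd K A M z = LinearMap.id := LinearMap.ext hz
    have hxt : x - t • z ∈ H ⊓ traceFree K A M := by
      refine ⟨H.sub_mem hx (H.smul_mem t hzH), mem_traceFree.mpr ?_⟩
      rw [map_sub, map_smul, hzid, map_sub, map_smul, LinearMap.trace_id, smul_eq_mul,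
        div_mul_cancel₀ _ (Nat.cast_ne_zero.mpr Module.finrank_pos.ne'), sub_self]
    have hsplit : ⁅x, m⁆ = ⁅x - t • z, m⁆ + t • m := by rw [sub_lie, smul_lie, hz, sub_add_cancel]
    rw [hsplit]
    exact N.add_mem (N.lie_mem (x := ⟨_, hxt⟩) hm) (N.smul_mem t hm)
  let N' : LieSubmodule K H M := { N.toSubmodule with lie_mem := fun {x m} hm => hlie x x.2 m hm }
  have hN' : N' = ⊤ := (eq_bot_or_eq_top N').resolve_left fun h =>
    hN (LieSubmodule.toSubmodule_injective (congrArg LieSubmodule.toSubmodule h :))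
  exact LieSubmodule.toSubmodule_injective (congrArg LieSubmodule.toSubmodule hN' :)

lemma normalizer_eq_self_of_isIrreducible [IsAlgClosed K] [LieModule.IsFaithful K A M] :
    H.normalizer = H := by
  refine le_antisymm (fun x hx => ?_) H.le_normalizer
  have : FiniteDimensional K A := FiniteDimensional.of_injective
    (LieModule.toEnd K A M : A →ₗ[K] Module.End K M) LieModule.IsFaithful.injective_toEnd
  let T := H ⊓ traceFree K A M
  have : LieModule.IsIrreducible K T M := isIrreducible_inf_traceFree hzH hz
  have : LieAlgebra.HasTrivialRadical K T :=
    LieAlgebra.hasTrivialRadical_of_isIrreducible_of_isFaithful K T M fun y => y.2.2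
  have hxT : x ∈ T.normalizer := (T.mem_normalizer_iff x).mpr fun y hy =>
    ⟨(H.mem_normalizer_iff x).mp hx y hy.1, lie_mem_traceFree x y⟩
  obtain ⟨y, hyT, hy⟩ := exists_lie_eq_of_mem_normalizer hxT
  obtain ⟨μ, hμ⟩ := exists_eq_smul_one_of_forall_lie (K := K) (A := T)
    (f := LieModule.toEnd K A M (x - y)) fun t m => by
      have hcomm : ⁅x - y, t.1⁆ = 0 := by rw [sub_lie, hy t t.2, sub_self]
      change ⁅x - y, ⁅t.1, m⁆⁆ = ⁅t.1, ⁅x - y, m⁆⁆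
      rw [leibniz_lie, hcomm, zero_lie, zero_add]
  have hxy : x - y = μ • z := LieModule.IsFaithful.injective_toEnd (R := K) (M := M) <|
    LinearMap.ext fun m => by
      rw [hμ, map_smul, LinearMap.smul_apply, LinearMap.smul_apply, LieModule.toEnd_apply_apply,
        hz, Module.End.one_apply]
  exact sub_add_cancel x y ▸ H.add_mem (hxy ▸ H.smul_mem μ hzH) hyT.1

end Normalizer

end LieAlgebra

section VectorFields

variable {𝕜 n}

lemma eq_sum_apply_X_smul_pderiv (D : Vect 𝕜 n) :
    D = ∑ i, D (X i) • (pderiv i : Vect 𝕜 n) := by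
  refine derivation_ext fun j => ?_
  rw [← Derivation.coeFnAddMonoidHom_apply, ← Derivation.coeFnAddMonoidHom_apply, map_sum]
  simp [pderiv_X, Pi.single_apply]

lemma euler_apply (f : MvPolynomial (Fin n) 𝕜) : euler 𝕜 n f = ∑ i, X i * pderiv i f := by
  rw [eq_sum_apply_X_smul_pderiv (euler 𝕜 n), ← Derivation.coeFnAddMonoidHom_apply, map_sum]
  simp [euler]

lemma coeff_euler (f : MvPolynomial (Fin n) 𝕜) (m : Fin n →₀ ℕ) :
    coeff m (euler 𝕜 n f) = m.degree * coeff m f := by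
  induction f using MvPolynomial.induction_on' with
  | monomial u a =>
    rw [euler_apply, (isHomogeneous_monomial a rfl).sum_X_mul_pderiv, coeff_smul, coeff_monomial]
    split_ifs with h <;> simp [h]
  | add p q hp hq => rw [map_add, coeff_add, coeff_add, hp, hq, mul_add]

lemma lie_pderiv_apply_X (D : Vect 𝕜 n) (i j : Fin n) :
    ⁅(pderiv j : Vect 𝕜 n), D⁆ (X i) = pderiv j (D (X i)) := by
  classical
  rw [Derivation.commutator_apply, pderiv_X, Pi.single_apply]
  split_ifs <;> simp

lemma mem_VectP {p : ℤ} {D : Vect 𝕜 n} : D ∈ VectP 𝕜 n p ↔ ⁅euler 𝕜 n, D⁆ = (p : 𝕜) • D :=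
  Module.End.mem_eigenspace_iff

lemma mem_VectP_neg_one_of_lie_pderiv_eq_zero {D : Vect 𝕜 n}
    (hD : ∀ j, ⁅(pderiv j : Vect 𝕜 n), D⁆ = 0) : D ∈ VectP 𝕜 n (-1) := by
  refine mem_VectP.mpr (derivation_ext fun i => ?_)
  have hdiff (j : Fin n) : pderiv j (D (X i)) = 0 := by
    rw [← lie_pderiv_apply_X, hD, Derivation.zero_apply]
  rw [Derivation.commutator_apply, euler_apply]
  simp [hdiff, euler]

lemma lie_mem_VectP {p q : ℤ} {x y : Vect 𝕜 n} (hx : x ∈ VectP 𝕜 n p) (hy : y ∈ VectP 𝕜 n q) :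
    ⁅x, y⁆ ∈ VectP 𝕜 n (p + q) := by
  rw [VectP, Int.cast_add]
  exact lie_mem_eigenspace_ad hx hy

lemma inf_VectP_neg_one_ne_bot {W : Submodule 𝕜 (Vect 𝕜 n)} (hW : W ≠ ⊥)
    (hlie : ∀ j, ∀ D ∈ W, ⁅(pderiv j : Vect 𝕜 n), D⁆ ∈ W) : W ⊓ VectP 𝕜 n (-1) ≠ ⊥ := by
  obtain ⟨D, hDW, hD0⟩ := Submodule.exists_mem_ne_zero_of_ne_bot hW
  obtain ⟨N, hN⟩ : ∃ N, ∀ i m, coeff m (D (X i)) ≠ 0 → m.degree < N :=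
    ⟨(Finset.univ.sup fun i => (D (X i)).totalDegree) + 1, fun i m hm => Nat.lt_succ_of_le <|
      (le_totalDegree (mem_support_iff.mpr hm)).trans
        (Finset.le_sup (f := fun i => (D (X i)).totalDegree) (Finset.mem_univ i))⟩
  induction N generalizing D with
  | zero =>
    refine absurd (derivation_ext fun i => MvPolynomial.ext _ _ fun m => ?_) hD0
    by_contra hm
    exact absurd (hN i m (by simpa using hm)) (Nat.not_lt_zero _)
  | succ N ih =>
    by_cases hconst : ∀ j, ⁅(pderiv j : Vect 𝕜 n), D⁆ = 0
    · exact Submodule.ne_bot_iff _ |>.mpr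
        ⟨D, ⟨hDW, mem_VectP_neg_one_of_lie_pderiv_eq_zero hconst⟩, hD0⟩
    · obtain ⟨j, hj⟩ := not_forall.mp hconst
      refine ih _ (hlie j D hDW) hj fun i m hm => ?_
      rw [lie_pderiv_apply_X, coeff_pderiv] at hm
      have hdeg := hN i _ (left_ne_zero_of_mul hm)
      rw [map_add, Finsupp.degree_single] at hdeg
      exact Nat.lt_of_succ_lt_succ hdeg

variable [CharZero 𝕜]

lemma mem_VectP_iff_coeff {p : ℤ} {D : Vect 𝕜 n} :
    D ∈ VectP 𝕜 n p ↔ ∀ i m, coeff m (D (X i)) ≠ 0 → (m.degree : ℤ) = p + 1 := by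
  have hcoeff (i : Fin n) (m : Fin n →₀ ℕ) : coeff m (⁅euler 𝕜 n, D⁆ (X i)) =
      coeff m (((p : 𝕜) • D) (X i)) ↔ coeff m (D (X i)) ≠ 0 → (m.degree : ℤ) = p + 1 := by
    rw [Derivation.commutator_apply, coeff_sub, coeff_euler, euler, mkDerivation_X, ← sub_one_mul,
      Derivation.smul_apply, coeff_smul, smul_eq_mul, mul_eq_mul_right_iff, sub_eq_iff_eq_add,
      or_iff_not_imp_right]
    exact_mod_cast Iff.rfl
  simp only [mem_VectP, ← hcoeff, ← MvPolynomial.ext_iff]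
  exact ⟨fun h i => by rw [h], derivation_ext⟩

lemma disjoint_VectP {p q : ℤ} (hpq : p ≠ q) :
    Disjoint (VectP 𝕜 n p) (VectP 𝕜 n q) :=
  Module.End.disjoint_genEigenspace _ (Int.cast_injective.ne hpq) 1 1

lemma smul_pderiv_mem_VectP {f : MvPolynomial (Fin n) 𝕜} {k : ℕ}
    (hf : f.IsHomogeneous k) (j : Fin n) : f • (pderiv j : Vect 𝕜 n) ∈ VectP 𝕜 n (k - 1) := by
  classical
  refine mem_VectP_iff_coeff.mpr fun i m hm => ?_
  rw [Derivation.smul_apply, pderiv_X, Pi.single_apply] at hm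
  split_ifs at hm with h
  · rw [smul_eq_mul, mul_one] at hm
    rw [sub_add_cancel, ← hf hm, Finsupp.degree_eq_weight_one]
    rfl
  · simp at hm

lemma pderiv_mem_VectP (j : Fin n) : (pderiv j : Vect 𝕜 n) ∈ VectP 𝕜 n (-1) := by
  simpa using smul_pderiv_mem_VectP (isHomogeneous_one (Fin n) 𝕜) j

lemma iSup_eigenspace_ad_euler :
    ⨆ μ, (LieAlgebra.ad 𝕜 (Vect 𝕜 n) (euler 𝕜 n)).eigenspace μ = ⊤ := by
  refine eq_top_iff.mpr fun D _ => ?_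
  rw [eq_sum_apply_X_smul_pderiv D]
  refine Submodule.sum_mem _ fun i _ => ?_
  rw [(D (X i)).as_sum, Finset.sum_smul]
  exact Submodule.sum_mem _ fun m _ =>
    Submodule.mem_iSup_of_mem _ (smul_pderiv_mem_VectP (isHomogeneous_monomial _ rfl) i)

instance finiteDimensional_VectP (p : ℤ) : FiniteDimensional 𝕜 (VectP 𝕜 n p) := by
  let N := (p + 1).toNat
  have hmem (D : VectP 𝕜 n p) (i : Fin n) : D.1 (X i) ∈ restrictTotalDegree (Fin n) 𝕜 N := by
    refine (mem_restrictTotalDegree ..).mpr (Finset.sup_le fun m hm => ?_)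
    have hdeg := mem_VectP_iff_coeff.mp D.2 i m (mem_support_iff.mp hm)
    change m.degree ≤ N
    omega
  let φ : VectP 𝕜 n p →ₗ[𝕜] (Fin n → restrictTotalDegree (Fin n) 𝕜 N) :=
    { toFun D i := ⟨D.1 (X i), hmem D i⟩
      map_add' _ _ := rfl
      map_smul' _ _ := rfl }
  exact FiniteDimensional.of_injective φ fun D D' h =>
    Subtype.ext (derivation_ext fun i => congrArg Subtype.val (congrFun h i))

lemma exists_lie_pderiv_ne_zero {p : ℤ} (hp : p ≠ -1) {D : Vect 𝕜 n} (hD : D ∈ VectP 𝕜 n p)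
    (hD0 : D ≠ 0) : ∃ j, ⁅(pderiv j : Vect 𝕜 n), D⁆ ≠ 0 := by
  by_contra! h
  exact hD0 (Submodule.disjoint_def.mp (disjoint_VectP hp) D hD
    (mem_VectP_neg_one_of_lie_pderiv_eq_zero h))

end VectorFields

section DegreeZero

/-- The Lie algebra `Vect₀(E) ≅ 𝔤𝔩(E)` of the linear vector fields. -/
noncomputable def linearFields : LieSubalgebra 𝕜 (Vect 𝕜 n) where
  __ := VectP 𝕜 n 0
  lie_mem' hx hy := by simpa using lie_mem_VectP hx hy

/-- The defining representation of `𝔤𝔩(E)` on `E`, realized as the bracket of linear vector fields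
with the constant ones. -/
noncomputable def constantFields : LieSubmodule 𝕜 (linearFields 𝕜 n) (Vect 𝕜 n) where
  __ := VectP 𝕜 n (-1)
  lie_mem {x} _ hy := by simpa using lie_mem_VectP x.2 hy

variable {𝕜 n} [CharZero 𝕜]

instance finiteDimensional_constantFields : FiniteDimensional 𝕜 (constantFields 𝕜 n) :=
  finiteDimensional_VectP (-1)

instance isFaithful_constantFields :
    LieModule.IsFaithful 𝕜 (linearFields 𝕜 n) (constantFields 𝕜 n) := by
  refine (LieModule.isFaithful_iff' ..).mpr fun x hx => Subtype.ext ?_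
  refine Submodule.disjoint_def.mp (disjoint_VectP (by decide)) x.1 x.2
    (mem_VectP_neg_one_of_lie_pderiv_eq_zero fun j => ?_)
  rw [← lie_skew, neg_eq_zero]
  exact congrArg Subtype.val (hx ⟨pderiv j, pderiv_mem_VectP j⟩)

end DegreeZero

/-- The class of subalgebras in the theorem, without finiteness and gradedness, which makes it
closed under enlargement: `L` contains the constant fields, its linear fields act irreducibly on
them, and it contains a nonzero quadratic field. -/
structure IsQuadraticIrreducible (L : LieSubalgebra 𝕜 (Vect 𝕜 n)) : Prop where
  constants_le : VectP 𝕜 n (-1) ≤ L.toSubmodule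
  irreducible : IsIrreducibleRep 𝕜 n L
  quadratic_ne_bot : L.toSubmodule ⊓ VectP 𝕜 n 1 ≠ ⊥

namespace IsQuadraticIrreducible

variable {𝕜 n} {L L' : LieSubalgebra 𝕜 (Vect 𝕜 n)}

lemma of_inf_VectP_le (hL : IsQuadraticIrreducible 𝕜 n L)
    (hle : ∀ p, L.toSubmodule ⊓ VectP 𝕜 n p ≤ L'.toSubmodule) :
    IsQuadraticIrreducible 𝕜 n L' := by
  have hconst : VectP 𝕜 n (-1) ≤ L'.toSubmodule := (le_inf hL.constants_le le_rfl).trans (hle _)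
  refine ⟨hconst, ?_, fun h =>
    hL.quadratic_ne_bot (eq_bot_mono (le_inf (hle _) inf_le_right) h)⟩
  have hirr := hL.irreducible
  rw [IsIrreducibleRep, inf_eq_right.mpr hL.constants_le] at hirr
  rw [IsIrreducibleRep, inf_eq_right.mpr hconst]
  exact ⟨hirr.1, fun F hF hF0 => hirr.2 F hF fun x hx => hF0 x ⟨hle _ hx, hx.2⟩⟩

lemma mono (hL : IsQuadraticIrreducible 𝕜 n L) (hle : L ≤ L') : IsQuadraticIrreducible 𝕜 n L' :=
  hL.of_inf_VectP_le fun _ => inf_le_left.trans hle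

lemma constants_ne_bot (hL : IsQuadraticIrreducible 𝕜 n L) : VectP 𝕜 n (-1) ≠ ⊥ :=
  inf_eq_right.mpr hL.constants_le ▸ hL.irreducible.1

lemma eq_bot_or_eq_constants (hL : IsQuadraticIrreducible 𝕜 n L) {F : Submodule 𝕜 (Vect 𝕜 n)}
    (hF : F ≤ VectP 𝕜 n (-1))
    (hlie : ∀ x ∈ L.toSubmodule ⊓ VectP 𝕜 n 0, ∀ y ∈ F, ⁅x, y⁆ ∈ F) :
    F = ⊥ ∨ F = VectP 𝕜 n (-1) := by
  have hirr := hL.irreducible.2 F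
  rw [inf_eq_right.mpr hL.constants_le] at hirr
  exact hirr hF hlie

lemma isIrreducible_constantFields (hL : IsQuadraticIrreducible 𝕜 n L) :
    LieModule.IsIrreducible 𝕜 (L.comap (linearFields 𝕜 n).incl) (constantFields 𝕜 n) := by
  have hne := hL.constants_ne_bot
  have : Nontrivial (constantFields 𝕜 n) := Submodule.nontrivial_iff_ne_bot.mpr hne
  refine LieModule.IsIrreducible.mk fun N hN => ?_
  let V := (constantFields 𝕜 n).toSubmodule
  let F := N.toSubmodule.map V.subtype
  have hlie : ∀ x ∈ L.toSubmodule ⊓ VectP 𝕜 n 0, ∀ y ∈ F, ⁅x, y⁆ ∈ F := by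
    rintro x ⟨hxL, hx0⟩ _ ⟨y, hy, rfl⟩
    exact ⟨_, N.lie_mem (x := ⟨⟨x, hx0⟩, hxL⟩) hy, rfl⟩
  have hinj := Submodule.map_injective_of_injective V.injective_subtype
  have hF0 : F ≠ ⊥ := (hinj.ne_iff' (Submodule.map_bot _)).mpr <|
    (LieSubmodule.toSubmodule_eq_bot N).not.mpr hN
  have hF : F = V := (hL.eq_bot_or_eq_constants (V.map_subtype_le _) hlie).resolve_left hF0
  exact (LieSubmodule.toSubmodule_eq_top N).mp (hinj (hF.trans V.map_subtype_top.symm))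

variable [CharZero 𝕜]

lemma constants_le_of_lie_mem (hL : IsQuadraticIrreducible 𝕜 n L)
    {W : Submodule 𝕜 (Vect 𝕜 n)} (hW : W ≠ ⊥) (hlie : ∀ x ∈ L, ∀ y ∈ W, ⁅x, y⁆ ∈ W) :
    VectP 𝕜 n (-1) ≤ W := by
  have hne := inf_VectP_neg_one_ne_bot hW fun j => hlie _ (hL.constants_le (pderiv_mem_VectP j))
  refine inf_eq_right.mp <| (hL.eq_bot_or_eq_constants inf_le_right ?_).resolve_left hne
  exact fun x hx y hy => ⟨hlie x hx.1 y hy.1, by simpa using lie_mem_VectP hx.2 hy.2⟩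

lemma exists_mem_coe_eq_of_ne_bot (hL : IsQuadraticIrreducible 𝕜 n L) {I : LieIdeal 𝕜 L}
    (hI : I ≠ ⊥) {c : Vect 𝕜 n} (hc : c ∈ VectP 𝕜 n (-1)) : ∃ y ∈ I, (y : Vect 𝕜 n) = c := by
  let W := I.toSubmodule.map L.toSubmodule.subtype
  have hW : W ≠ ⊥ := 
    ((Submodule.map_injective_of_injective L.toSubmodule.injective_subtype).ne_iff'
      (Submodule.map_bot _)).mpr <|
      (LieSubmodule.toSubmodule_eq_bot I).not.mpr hI
  refine hL.constants_le_of_lie_mem hW ?_ hc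
  rintro x hx _ ⟨y, hy, rfl⟩
  exact ⟨⁅(⟨x, hx⟩ : L), y⁆, I.lie_mem hy, rfl⟩

lemma exists_lie_lie_pderiv_ne_zero (hL : IsQuadraticIrreducible 𝕜 n L) :
    ∃ y ∈ L, ∃ i j, ⁅(pderiv j : Vect 𝕜 n), ⁅(pderiv i : Vect 𝕜 n), y⁆⁆ ≠ 0 := by
  obtain ⟨y, hy, hy0⟩ := Submodule.exists_mem_ne_zero_of_ne_bot hL.quadratic_ne_bot
  obtain ⟨i, hi⟩ := exists_lie_pderiv_ne_zero (by decide) hy.2 hy0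
  have hiy := lie_mem_VectP (pderiv_mem_VectP i) hy.2
  exact ⟨y, hy.1, i, exists_lie_pderiv_ne_zero (by decide) hiy hi⟩

lemma hasTrivialRadical (hL : IsQuadraticIrreducible 𝕜 n L) [FiniteDimensional 𝕜 L] :
    LieAlgebra.HasTrivialRadical 𝕜 L := by
  refine (LieAlgebra.hasTrivialRadical_iff_no_abelian_ideals 𝕜 L).mpr fun I hI => ?_
  by_contra hne
  obtain ⟨y, hy, i, j, hij⟩ := hL.exists_lie_lie_pderiv_ne_zero
  obtain ⟨a, ha, hai⟩ := hL.exists_mem_coe_eq_of_ne_bot hne (pderiv_mem_VectP i)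
  obtain ⟨b, hb, hbj⟩ := hL.exists_mem_coe_eq_of_ne_bot hne (pderiv_mem_VectP j)
  have hay : ⁅a, (⟨y, hy⟩ : L)⁆ ∈ I := lie_mem_left 𝕜 L I a _ ha
  have habel : ⁅b, ⁅a, (⟨y, hy⟩ : L)⁆⁆ = 0 :=
    congrArg Subtype.val (hI.trivial (⟨b, hb⟩ : I) ⟨_, hay⟩)
  rw [← hai, ← hbj] at hij
  exact hij (congrArg Subtype.val habel)

lemma eq_top_of_ne_bot (hL : IsQuadraticIrreducible 𝕜 n L) [FiniteDimensional 𝕜 L]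
    {I : LieIdeal 𝕜 L} (hI : I ≠ ⊥) : I = ⊤ := by
  have := hL.hasTrivialRadical
  have hcompl := LieIdeal.isCompl_killingCompl I
  suffices h : LieIdeal.killingCompl 𝕜 L I = ⊥ from eq_top_of_isCompl_bot (h ▸ hcompl)
  by_contra hne
  obtain ⟨c, hc, hc0⟩ := Submodule.exists_mem_ne_zero_of_ne_bot hL.constants_ne_bot
  obtain ⟨a, ha, rfl⟩ := hL.exists_mem_coe_eq_of_ne_bot hI hc
  obtain ⟨b, hb, hba⟩ := hL.exists_mem_coe_eq_of_ne_bot hne hc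
  obtain rfl : b = a := Subtype.ext hba
  have hb0 : b ∈ I ⊓ LieIdeal.killingCompl 𝕜 L I := ⟨ha, hb⟩
  rw [hcompl.inf_eq_bot, LieSubmodule.mem_bot] at hb0
  exact hc0 (congrArg Subtype.val hb0)

lemma eq_of_le_of_finiteDimensional (hL : IsQuadraticIrreducible 𝕜 n L) (hle : L ≤ L')
    [FiniteDimensional 𝕜 L'] : L' = L := by
  let H := LieSubalgebra.ofLe hle
  have : FiniteDimensional 𝕜 L := Submodule.finiteDimensional_of_le hle
  have := hL.hasTrivialRadical
  have : LieAlgebra.IsKilling 𝕜 H :=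
    LieAlgebra.isKilling_of_equiv (LieSubalgebra.equivOfLe hle)
  have hcompl := isCompl_killingForm_orthogonal H
  let P := (killingForm 𝕜 L').orthogonal H.toSubmodule
  have hPbot : P = ⊥ := by
    by_contra hne
    let W := P.map L'.toSubmodule.subtype
    have hW : W ≠ ⊥ := 
      ((Submodule.map_injective_of_injective L'.toSubmodule.injective_subtype).ne_iff'
        (Submodule.map_bot _)).mpr hne
    have hlie : ∀ x ∈ L, ∀ y ∈ W, ⁅x, y⁆ ∈ W := by
      rintro x hx _ ⟨y, hy, rfl⟩
      refine ⟨⁅(⟨x, hle hx⟩ : L'), y⁆, fun z hz => ?_, rfl⟩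
      have hzx : ⁅z, (⟨x, hle hx⟩ : L')⁆ ∈ H :=
        H.lie_mem hz ((LieSubalgebra.mem_ofLe hle _).mpr hx)
      exact (LieModule.traceForm_apply_lie_apply 𝕜 L' L' z _ y).symm.trans (hy _ hzx)
    obtain ⟨c, hc, hc0⟩ := Submodule.exists_mem_ne_zero_of_ne_bot hL.constants_ne_bot
    obtain ⟨y, hy, rfl⟩ := hL.constants_le_of_lie_mem hW hlie hc
    have hyH : y ∈ H := (LieSubalgebra.mem_ofLe hle y).mpr (hL.constants_le hc)
    exact hc0 (congrArg Subtype.val (Submodule.disjoint_def.mp hcompl.disjoint y hyH hy))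
  have hH : H.toSubmodule = ⊤ := eq_top_of_isCompl_bot (hPbot ▸ hcompl)
  exact hle.antisymm' fun x hx =>
    (LieSubalgebra.mem_ofLe hle ⟨x, hx⟩).mp (hH ▸ trivial : _ ∈ H.toSubmodule)

lemma euler_mem (hL : IsQuadraticIrreducible 𝕜 n L) [FiniteDimensional 𝕜 L] : euler 𝕜 n ∈ L := by
  -- `L` need not be graded, but the subalgebra `K` generated by its homogeneous elements is
  -- normalized by the Euler field.
  let K := LieSubalgebra.lieSpan 𝕜 (Vect 𝕜 n) {x | x ∈ L ∧ ∃ p, x ∈ VectP 𝕜 n p}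
  have hK : IsQuadraticIrreducible 𝕜 n K :=
    hL.of_inf_VectP_le fun p x hx => LieSubalgebra.subset_lieSpan ⟨hx.1, p, hx.2⟩
  have hKL : K ≤ L := LieSubalgebra.lieSpan_le.mpr fun x hx => hx.1
  have : FiniteDimensional 𝕜 K := Submodule.finiteDimensional_of_le hKL
  have := hK.hasTrivialRadical
  have hnorm : euler 𝕜 n ∈ K.normalizer := mem_normalizer_lieSpan fun x ⟨hx, p, hp⟩ =>
    mem_VectP.mp hp ▸ K.smul_mem _ (LieSubalgebra.subset_lieSpan ⟨hx, p, hp⟩)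
  obtain ⟨y, hyK, hy⟩ := exists_lie_eq_of_mem_normalizer hnorm
  have hconst : euler 𝕜 n - y ∈ VectP 𝕜 n (-1) :=
    mem_VectP_neg_one_of_lie_pderiv_eq_zero fun j => by
      rw [← lie_skew, sub_lie, hy _ (hK.constants_le (pderiv_mem_VectP j)), sub_self, neg_zero]
  exact sub_add_cancel (euler 𝕜 n) y ▸ hKL (K.add_mem (hK.constants_le hconst) hyK)

variable [IsAlgClosed 𝕜]

lemma mem_of_mem_normalizer_of_mem_VectP_zero (hL : IsQuadraticIrreducible 𝕜 n L)
    (heL : euler 𝕜 n ∈ L) {x : Vect 𝕜 n} (hx : x ∈ L.normalizer) (hx0 : x ∈ VectP 𝕜 n 0) :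
    x ∈ L := by
  let H := L.comap (linearFields 𝕜 n).incl
  have := hL.isIrreducible_constantFields
  have he0 : euler 𝕜 n ∈ VectP 𝕜 n 0 := by simp [mem_VectP]
  have hzH : -(⟨euler 𝕜 n, he0⟩ : linearFields 𝕜 n) ∈ H := H.neg_mem heL
  have hH : H.normalizer = H :=
    normalizer_eq_self_of_isIrreducible (M := constantFields 𝕜 n) hzH fun y => by
      rw [neg_lie, neg_eq_iff_eq_neg]
      exact Subtype.ext <| (mem_VectP.mp y.2).trans <| by
        rw [Int.cast_neg, Int.cast_one]
        exact neg_one_smul 𝕜 y.1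
  have hxH : (⟨x, hx0⟩ : linearFields 𝕜 n) ∈ H.normalizer :=
    (H.mem_normalizer_iff _).mpr fun y hy => (L.mem_normalizer_iff x).mp hx y hy
  exact (hH ▸ hxH : _ ∈ H)

lemma normalizer_eq_self (hL : IsQuadraticIrreducible 𝕜 n L) (heL : euler 𝕜 n ∈ L) :
    L.normalizer = L := by
  refine le_antisymm (fun x hx => ?_) L.le_normalizer
  have hx_iSup : x ∈ ⨆ μ, (LieAlgebra.ad 𝕜 (Vect 𝕜 n) (euler 𝕜 n)).eigenspace μ :=
    iSup_eigenspace_ad_euler (𝕜 := 𝕜) (n := n) ▸ Submodule.mem_top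
  obtain ⟨u, hu, hux⟩ := (Submodule.mem_iSup_iff_exists_finsupp _ x).mp hx_iSup
  have hnorm : ∀ μ ∈ u.support, u μ ∈ L.normalizer :=
    mem_of_sum_mem_of_mapsTo (f := LieAlgebra.ad 𝕜 (Vect 𝕜 n) (euler 𝕜 n))
      (p := L.normalizer.toSubmodule) (fun v hv => L.normalizer.lie_mem (L.le_normalizer heL) hv)
      (fun μ _ => hu μ) (by rwa [← hux] at hx)
  rw [← hux]
  refine L.toSubmodule.sum_mem fun μ hμ => ?_
  have heu : ⁅euler 𝕜 n, u μ⁆ = μ • u μ := Module.End.mem_eigenspace_iff.mp (hu μ)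
  rcases eq_or_ne μ 0 with rfl | hμ0
  · exact hL.mem_of_mem_normalizer_of_mem_VectP_zero heL (hnorm 0 hμ)
      (mem_VectP.mpr (by simpa using heu))
  · refine (L.toSubmodule.smul_mem_iff hμ0).mp (heu ▸ ?_)
    exact (L.mem_normalizer_iff' _).mp (hnorm μ hμ) _ heL

lemma isSimple (hL : IsQuadraticIrreducible 𝕜 n L) [FiniteDimensional 𝕜 L]
    (hle : L ≤ L') : LieAlgebra.IsSimple 𝕜 L' where
  non_abelian habel := by
    obtain ⟨y, hy, i, j, hij⟩ := (hL.mono hle).exists_lie_lie_pderiv_ne_zero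
    have hiy := habel.trivial (⟨_, (hL.mono hle).constants_le (pderiv_mem_VectP i)⟩ : L') ⟨y, hy⟩
    have hiy0 : ⁅(pderiv i : Vect 𝕜 n), y⁆ = 0 := congrArg Subtype.val hiy
    exact hij (hiy0.symm ▸ lie_zero (pderiv j : Vect 𝕜 n))
  eq_bot_or_eq_top I := by
    refine or_iff_not_imp_left.mpr fun hI => ?_
    let S : LieSubalgebra 𝕜 (Vect 𝕜 n) := I.toLieSubalgebra.map L'.incl
    let J : LieIdeal 𝕜 L := I.comap (LieSubalgebra.inclusion hle)
    have hJ : J ≠ ⊥ := by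
      obtain ⟨c, hc, hc0⟩ := Submodule.exists_mem_ne_zero_of_ne_bot hL.constants_ne_bot
      obtain ⟨y, hyI, rfl⟩ := (hL.mono hle).exists_mem_coe_eq_of_ne_bot hI hc
      have hyJ : (⟨y, hL.constants_le hc⟩ : L) ∈ J := hyI
      intro hJ0
      rw [hJ0, LieSubmodule.mem_bot] at hyJ
      exact hc0 (congrArg Subtype.val hyJ)
    have hLS : L ≤ S := fun x hx =>
      ⟨⟨x, hle hx⟩, (hL.eq_top_of_ne_bot hJ ▸ trivial : (⟨x, hx⟩ : L) ∈ J), rfl⟩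
    have hS := (hL.mono hLS).normalizer_eq_self (hLS hL.euler_mem)
    have hLS' : L' ≤ S.normalizer := fun x hx => (S.mem_normalizer_iff x).mpr <| by
      rintro _ ⟨y, hy, rfl⟩
      exact ⟨⁅(⟨x, hx⟩ : L'), y⁆, I.lie_mem hy, rfl⟩
    refine eq_top_iff.mpr fun x _ => ?_
    obtain ⟨y, hy, hyx⟩ := hS ▸ hLS' x.2
    exact Subtype.ext hyx ▸ hy

end IsQuadraticIrreducible

theorem statement15_general {𝕜 : Type*} [Field 𝕜] [IsAlgClosed 𝕜] [CharZero 𝕜] {n : ℕ}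
    {L : LieSubalgebra 𝕜 (Vect 𝕜 n)} [FiniteDimensional 𝕜 L]
    (hconst : VectP 𝕜 n (-1) ≤ L.toSubmodule) (hirr : IsIrreducibleRep 𝕜 n L)
    (hquad : L.toSubmodule ⊓ VectP 𝕜 n 1 ≠ ⊥) {L' : LieSubalgebra 𝕜 (Vect 𝕜 n)} (hle : L ≤ L') :
    (L ≠ L' → ¬ FiniteDimensional 𝕜 L') ∧ LieAlgebra.IsSimple 𝕜 L' :=
  have hL : IsQuadraticIrreducible 𝕜 n L := ⟨hconst, hirr, hquad⟩
  ⟨fun hne _ => hne (hL.eq_of_le_of_finiteDimensional hle).symm, hL.isSimple hle⟩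

/-- Let `E = ℂ^n` (`n ≥ 1`) and `L = L₋₁ ⊕ L₀ ⊕ L₁` an irreducible graded Lie subalgebra of
`Vect_pol(E)` with `L₋₁ = Vect₋₁(E)` and `L₁ ≠ 0`.  If a Lie subalgebra `L'` of
`Vect_pol(E)` contains `L` properly, then `L'` is infinite-dimensional and simple. -/
theorem statement15 (n : ℕ) (hn : 0 < n)
    (L : LieSubalgebra ℂ (Vect ℂ n))
    (hgraded : L.toSubmodule =
      (L.toSubmodule ⊓ VectP ℂ n (-1)) ⊔ (L.toSubmodule ⊓ VectP ℂ n 0) ⊔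
        (L.toSubmodule ⊓ VectP ℂ n 1))
    (hm1 : L.toSubmodule ⊓ VectP ℂ n (-1) = VectP ℂ n (-1))
    (hirr : IsIrreducibleRep ℂ n L)
    (h1 : L.toSubmodule ⊓ VectP ℂ n 1 ≠ ⊥)
    (L' : LieSubalgebra ℂ (Vect ℂ n)) (hlt : L < L') :
    ¬ FiniteDimensional ℂ L' ∧ LieAlgebra.IsSimple ℂ L' := by
  have : FiniteDimensional ℂ L := by
    change FiniteDimensional ℂ L.toSubmodule
    rw [hgraded]
    infer_instance
  exact (statement15_general (inf_eq_right.mp hm1) hirr h1 hlt.le).imp_left (· hlt.ne)
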